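/- Let α > 0 and β = 2^α − 1. There exists a constant C > 0 such that for every sequence (a_n) of complex numbers with Σ_{n=1}^∞ |a_n|²/d(n)^α < ∞, the analytic function f(s) = Σ_{n=1}^∞ a_n n^{−s} on ℂ_{1/2} satisfies ∫_{Re s > 1/2} |f(s)|² (Re s − 1/2)^{β−1} |s + 1/2|^{−2β−2} dA(s) ≤ C · Σ_{n=1}^∞ |a_n|²/d(n)^α, where dA is planar Lebesgue measure. -/

import Mathlib

open Complex Filter MeasureTheory Finset

noncomputable section

/-- `numDiv n` is the number of divisors `d(n)` of `n`. -/
def numDiv (n : ℕ) : ℕ := n.divisors.card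

/-!
For a Dirichlet polynomial `f(s) = ∑ a_n n⁻ˢ`, the quotient `f(s) / (s + 1/2)` is the Laplace
transform at `s + 1/2` of the step function `A(x) = ∑_{log n < x} a_n √n`, so on the line
`Re s = 1/2 + u` Plancherel's theorem gives
`∫ |f(s) / (s + 1/2)|² dt = 2π ∫ |A(x)|² e^{-2(1 + u)x} dx`. Bounding the remaining factor
`|s + 1/2|^{-2β}` by `(1 + u)^{-2β}` and integrating against `u^{β-1} du` leaves
`∫ |A(x)|² e^{-2x} (1 + x)^{-β} dx` up to a constant. By Cauchy–Schwarz `|A(x)|²` is at most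
`∑_{n ≤ eˣ} d(n)^α` times `∑_{log n < x} n |a_n|² / d(n)^α`, and the classical bound
`∑_{n ≤ N} d(n)^α ≪ N (1 + log N)^β` cancels the factor `(1 + x)^{-β}` exactly. Fatou's lemma passes
from polynomials to series.

The mean value bound is obtained from `∑_{n ≤ N} d(n)^α / n ≪ (log N)^{2^α}`, which is read off the
Euler product at `s = 1 + 1 / log N`, and one logarithm is gained by writing `log = Λ * 1` and using
Chebyshev's estimates together with submultiplicativity of `d`.
-/

section PrimeSums

theorem tsum_nat_rpow_neg_le {s : ℝ} (hs : 1 < s) : ∑' n : ℕ, (n : ℝ) ^ (-s) ≤ s / (s - 1) := by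
  have hsum : Summable fun n : ℕ => (n : ℝ) ^ (-s) := Real.summable_nat_rpow.mpr (by linarith)
  have hpos : ∀ x ∈ Set.Ici (1 : ℝ), 0 < x := fun x hx => one_pos.trans_le hx
  have htail : ∑' n : ℕ, ((n + 1 + 1 : ℕ) : ℝ) ^ (-s) ≤ ∫ x in Set.Ioi (1 : ℝ), x ^ (-s) := by
    exact_mod_cast AntitoneOn.tsum_comp_add_le_integral (f := fun x : ℝ => x ^ (-s)) 1
      (fun x hx y _ hxy => Real.rpow_le_rpow_of_nonpos (hpos x (by simpa using hx)) hxy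
        (by linarith))
      (by simpa using integrableOn_Ioi_rpow_of_lt (by linarith) one_pos)
      (fun x hx => Real.rpow_nonneg (hpos x (Set.Ioi_subset_Ici_self (by simpa using hx))).le _)
  rw [integral_Ioi_rpow_of_lt (by linarith) one_pos] at htail
  rw [hsum.tsum_eq_zero_add, ((summable_nat_add_iff 1).mpr hsum).tsum_eq_zero_add]
  calc ((0 : ℕ) : ℝ) ^ (-s) + (((0 + 1 : ℕ) : ℝ) ^ (-s) + ∑' n : ℕ, ((n + 1 + 1 : ℕ) : ℝ) ^ (-s))
      ≤ 0 + (1 + -1 ^ (-s + 1) / (-s + 1)) := by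
        gcongr
        · simp [Real.zero_rpow (show -s ≠ 0 by linarith)]
        · simp
    _ = s / (s - 1) := by
        rw [Real.one_rpow]
        have h₁ : s - 1 ≠ 0 := by linarith
        have h₂ : -s + 1 ≠ 0 := by linarith
        field_simp
        ring

theorem rpow_neg_le_half_of_prime {p : ℕ} (hp : p.Prime) {s : ℝ} (hs : 1 ≤ s) :
    (p : ℝ) ^ (-s) ≤ 1 / 2 := by
  have hp2 : (2 : ℝ) ≤ p := by exact_mod_cast hp.two_le
  calc (p : ℝ) ^ (-s) ≤ (p : ℝ) ^ (-1 : ℝ) :=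
        Real.rpow_le_rpow_of_exponent_le (by linarith) (by linarith)
    _ = 1 / p := by rw [Real.rpow_neg_one, one_div]
    _ ≤ 1 / 2 := by gcongr

theorem rpow_neg_natCast_pow (p k : ℕ) (s : ℝ) :
    ((p ^ k : ℕ) : ℝ) ^ (-s) = ((p : ℝ) ^ (-s)) ^ k := by
  rw [Nat.cast_pow, ← Real.rpow_natCast_mul p.cast_nonneg, mul_comm,
    Real.rpow_mul_natCast p.cast_nonneg]

theorem exp_sum_primesBelow_rpow_neg_le {s : ℝ} (hs : 1 < s) (N : ℕ) :
    Real.exp (∑ p ∈ N.primesBelow, (p : ℝ) ^ (-s)) ≤ s / (s - 1) := by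
  have hsum : Summable fun n : ℕ => (n : ℝ) ^ (-s) := Real.summable_nat_rpow.mpr (by linarith)
  calc Real.exp (∑ p ∈ N.primesBelow, (p : ℝ) ^ (-s))
      = ∏ p ∈ N.primesBelow, Real.exp ((p : ℝ) ^ (-s)) := Real.exp_sum _ _
    _ ≤ ∏ p ∈ N.primesBelow, ∑' k : ℕ, ((p ^ k : ℕ) : ℝ) ^ (-s) := by
        refine Finset.prod_le_prod (fun _ _ => (Real.exp_pos _).le) fun p hp => ?_
        have hhalf := rpow_neg_le_half_of_prime (Nat.prime_of_mem_primesBelow hp) hs.le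
        have h0 : 0 ≤ (p : ℝ) ^ (-s) := by positivity
        simp_rw [rpow_neg_natCast_pow]
        rw [tsum_geometric_of_lt_one h0 (by linarith), ← one_div]
        exact Real.exp_bound_div_one_sub_of_interval h0 (by linarith)
    _ = ∑' n : N.smoothNumbers, ((n : ℕ) : ℝ) ^ (-s) :=
        EulerProduct.prod_primesBelow_tsum_eq_tsum_smoothNumbers (by simp)
          (fun _ => by rw [Nat.cast_mul, Real.mul_rpow (by positivity) (by positivity)])
          hsum.norm N
    _ ≤ ∑' n : ℕ, (n : ℝ) ^ (-s) :=
        hsum.tsum_subtype_le _ (N.smoothNumbers) fun n => by positivity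
    _ ≤ s / (s - 1) := tsum_nat_rpow_neg_le hs

end PrimeSums

section EulerProduct

theorem tsum_mul_pow_le_exp {c : ℕ → ℝ} {r x : ℝ} (hc : ∀ k, 0 ≤ c k) (hc0 : c 0 = 1)
    (hr : 0 < r) (hsum : Summable fun k => c k * r ^ k) (hx : 0 ≤ x) (hxr : x ≤ r) :
    ∑' k, c k * x ^ k ≤ Real.exp (c 1 * x + (∑' k, c (k + 2) * r ^ k) * x ^ 2) := by
  have hle : ∀ j k : ℕ, c j * x ^ k ≤ c j * r ^ k := fun j k =>
    mul_le_mul_of_nonneg_left (by gcongr) (hc j)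
  have hnonneg : ∀ j k : ℕ, 0 ≤ c j * x ^ k := fun j k => mul_nonneg (hc j) (by positivity)
  have hsumx : Summable fun k => c k * x ^ k := hsum.of_nonneg_of_le (fun _ => hnonneg _ _) fun _ =>
    hle _ _
  have hshift : Summable fun k => c (k + 2) * r ^ k :=
    (((summable_nat_add_iff 2).mpr hsum).mul_right (r ^ 2)⁻¹).congr fun k => by
      field_simp
      ring
  have htail : ∑' k, c (k + 2) * x ^ k ≤ ∑' k, c (k + 2) * r ^ k :=
    (hshift.of_nonneg_of_le (fun _ => hnonneg _ _) fun _ => hle _ _).tsum_le_tsum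
      (fun _ => hle _ _) hshift
  calc ∑' k, c k * x ^ k
      = 1 + c 1 * x + (∑' k, c (k + 2) * x ^ k) * x ^ 2 := by
        rw [← hsumx.sum_add_tsum_nat_add 2, ← tsum_mul_right]
        simp [Finset.sum_range_succ, hc0, pow_add, mul_assoc]
    _ ≤ c 1 * x + (∑' k, c (k + 2) * r ^ k) * x ^ 2 + 1 := by
        linarith [mul_le_mul_of_nonneg_right htail (sq_nonneg x)]
    _ ≤ _ := Real.add_one_le_exp _

theorem tsum_mul_rpow_neg_pow_le_exp {c : ℕ → ℝ} (hc : ∀ k, 0 ≤ c k) (hc0 : c 0 = 1)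
    (hsum : Summable fun k => c k * (1 / 2) ^ k) {p : ℕ} (hp : p.Prime) {s : ℝ} (hs : 1 ≤ s) :
    ∑' k, c k * ((p : ℝ) ^ (-s)) ^ k ≤
      Real.exp (c 1 * (p : ℝ) ^ (-s) + (∑' k, c (k + 2) * (1 / 2) ^ k) * (p : ℝ) ^ (-2 : ℝ)) := by
  have hp1 : (1 : ℝ) ≤ p := by exact_mod_cast hp.one_le
  have hsq : ((p : ℝ) ^ (-s)) ^ 2 ≤ (p : ℝ) ^ (-2 : ℝ) := by
    rw [← Real.rpow_mul_natCast p.cast_nonneg]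
    exact Real.rpow_le_rpow_of_exponent_le hp1 (by push_cast; linarith)
  refine (tsum_mul_pow_le_exp hc hc0 one_half_pos hsum (by positivity)
    (rpow_neg_le_half_of_prime hp hs)).trans ?_
  gcongr
  exact tsum_nonneg fun k => mul_nonneg (hc _) (by positivity)

theorem sum_Ioc_le_prod_primesBelow_tsum {f : ℕ → ℝ} (hf : ∀ n, 0 ≤ f n) (hf1 : f 1 = 1)
    (hmul : ∀ {m n : ℕ}, m.Coprime n → f (m * n) = f m * f n)
    (hsum : ∀ {p : ℕ}, p.Prime → Summable fun k => f (p ^ k)) (N : ℕ) :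
    ∑ n ∈ Ioc 0 N, f n ≤ ∏ p ∈ (N + 1).primesBelow, ∑' k, f (p ^ k) := by
  have hprod := (EulerProduct.summable_and_hasSum_smoothNumbers_prod_primesBelow_tsum hf1 hmul
    (fun hp => (hsum hp).norm) (N + 1)).2
  have hsmooth : ∀ n ∈ Ioc 0 N, n ∈ (N + 1).smoothNumbers := fun n hn =>
    Nat.mem_smoothNumbers_of_lt (mem_Ioc.mp hn).1 (Nat.lt_succ_of_le (mem_Ioc.mp hn).2)
  rw [← Finset.sum_subtype_of_mem f hsmooth]
  exact sum_le_hasSum _ (fun n _ => hf n) hprod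

variable {w : ArithmeticFunction ℝ} {c : ℕ → ℝ}

theorem exists_sum_mul_rpow_neg_le (hw : ∀ n, 0 ≤ w n) (hmul : w.IsMultiplicative)
    (hpow : ∀ p k : ℕ, p.Prime → w (p ^ k) = c k)
    (hsum : Summable fun k => c k * (1 / 2) ^ k) :
    ∃ K > 0, ∀ s > 1, ∀ N : ℕ,
      ∑ n ∈ Ioc 0 N, w n * (n : ℝ) ^ (-s) ≤ K * (s / (s - 1)) ^ c 1 := by
  have hc : ∀ k, 0 ≤ c k := fun k => hpow 2 k Nat.prime_two ▸ hw _
  have hc0 : c 0 = 1 := by rw [← hpow 2 0 Nat.prime_two, pow_zero, hmul.map_one]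
  set D := ∑' k, c (k + 2) * (1 / 2) ^ k
  have hD : 0 ≤ D := tsum_nonneg fun k => mul_nonneg (hc _) (by positivity)
  have hsum_sq : Summable fun n : ℕ => (n : ℝ) ^ (-2 : ℝ) :=
    Real.summable_nat_rpow.mpr (by norm_num)
  refine ⟨Real.exp (D * ∑' n : ℕ, (n : ℝ) ^ (-2 : ℝ)), Real.exp_pos _, fun s hs N => ?_⟩
  have hterm : ∀ p : ℕ, p.Prime → ∀ k : ℕ,
      w (p ^ k) * ((p ^ k : ℕ) : ℝ) ^ (-s) = c k * ((p : ℝ) ^ (-s)) ^ k := fun p hp k => by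
    rw [hpow p k hp, rpow_neg_natCast_pow]
  calc ∑ n ∈ Ioc 0 N, w n * (n : ℝ) ^ (-s)
      ≤ ∏ p ∈ (N + 1).primesBelow, ∑' k, w (p ^ k) * ((p ^ k : ℕ) : ℝ) ^ (-s) := by
        refine sum_Ioc_le_prod_primesBelow_tsum (f := fun n => w n * (n : ℝ) ^ (-s))
          (fun n => mul_nonneg (hw n) (by positivity)) (by simp [hmul.map_one])
          (fun {m n} h => ?_) (fun {p} hp => ?_) N
        · simp only [hmul.map_mul_of_coprime h, Nat.cast_mul,
            Real.mul_rpow m.cast_nonneg n.cast_nonneg]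
          ring
        · simp_rw [hterm p hp]
          refine hsum.of_nonneg_of_le (fun k => mul_nonneg (hc k) (by positivity)) fun k => ?_
          exact mul_le_mul_of_nonneg_left
            (by gcongr; exact rpow_neg_le_half_of_prime hp hs.le) (hc k)
    _ ≤ ∏ p ∈ (N + 1).primesBelow, Real.exp (c 1 * (p : ℝ) ^ (-s) + D * (p : ℝ) ^ (-2 : ℝ)) :=
        Finset.prod_le_prod (fun p _ => tsum_nonneg fun k => mul_nonneg (hw _) (by positivity))
          fun p hp => by
            have hp := Nat.prime_of_mem_primesBelow hp
            simp_rw [hterm p hp]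
            exact tsum_mul_rpow_neg_pow_le_exp hc hc0 hsum hp hs.le
    _ = Real.exp (D * ∑ p ∈ (N + 1).primesBelow, (p : ℝ) ^ (-2 : ℝ)) *
          Real.exp (∑ p ∈ (N + 1).primesBelow, (p : ℝ) ^ (-s)) ^ c 1 := by
        rw [← Real.exp_sum, ← Real.exp_mul, ← Real.exp_add, Finset.sum_add_distrib,
          ← Finset.mul_sum, ← Finset.mul_sum]
        ring_nf
    _ ≤ _ := by
        gcongr
        · exact hsum_sq.sum_le_tsum _ fun n _ => by positivity
        · exact hc 1
        · exact exp_sum_primesBelow_rpow_neg_le hs _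

end EulerProduct

section SummatoryFunction

open scoped ArithmeticFunction.vonMangoldt

theorem rpow_inv_one_add_log_le_exp_one {n N : ℕ} (hn : n ≠ 0) (hnN : n ≤ N) :
    (n : ℝ) ^ (1 / (1 + Real.log N)) ≤ Real.exp 1 := by
  have hn0 : (0 : ℝ) < n := by positivity
  have hlog : Real.log n ≤ Real.log N := Real.log_le_log hn0 (by exact_mod_cast hnN)
  rw [Real.rpow_def_of_pos hn0, mul_one_div]
  gcongr
  rw [div_le_one (by positivity)]
  linarith

variable {w : ArithmeticFunction ℝ} {c : ℕ → ℝ}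

/- Rankin's trick: `n⁻¹ ≤ e * n ^ (-s)` for `n ≤ N` when `s = 1 + 1 / (1 + log N)`. -/
theorem exists_sum_div_le_one_add_log_rpow (hw : ∀ n, 0 ≤ w n) (hmul : w.IsMultiplicative)
    (hpow : ∀ p k : ℕ, p.Prime → w (p ^ k) = c k)
    (hsum : Summable fun k => c k * (1 / 2) ^ k) :
    ∃ K > 0, ∀ N : ℕ, ∑ n ∈ Ioc 0 N, w n / n ≤ K * (1 + Real.log N) ^ c 1 := by
  obtain ⟨K, hK, hbound⟩ := exists_sum_mul_rpow_neg_le hw hmul hpow hsum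
  have hc1 : 0 ≤ c 1 := hpow 2 1 Nat.prime_two ▸ hw _
  refine ⟨Real.exp 1 * (K * 2 ^ c 1), by positivity, fun N => ?_⟩
  set L := 1 + Real.log N
  have hL1 : 1 ≤ L := by linarith [Real.log_natCast_nonneg N]
  calc ∑ n ∈ Ioc 0 N, w n / n
      ≤ ∑ n ∈ Ioc 0 N, Real.exp 1 * (w n * (n : ℝ) ^ (-(1 + 1 / L))) := by
        refine Finset.sum_le_sum fun n hn => ?_
        obtain ⟨hn0, hnN⟩ := mem_Ioc.mp hn
        have hn0' : (0 : ℝ) < n := by exact_mod_cast hn0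
        have hexp := rpow_inv_one_add_log_le_exp_one hn0.ne' hnN
        rw [neg_add, Real.rpow_add hn0', Real.rpow_neg_one, Real.rpow_neg hn0'.le, div_eq_mul_inv,
          mul_left_comm]
        refine mul_le_mul_of_nonneg_left ?_ (hw n)
        rw [mul_left_comm, ← div_eq_mul_inv (Real.exp 1)]
        exact le_mul_of_one_le_right (by positivity) ((one_le_div (by positivity)).mpr hexp)
    _ = Real.exp 1 * ∑ n ∈ Ioc 0 N, w n * (n : ℝ) ^ (-(1 + 1 / L)) := (Finset.mul_sum _ _ _).symm
    _ ≤ Real.exp 1 * (K * ((1 + 1 / L) / (1 + 1 / L - 1)) ^ c 1) := by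
        gcongr
        exact hbound _ (by linarith [show 0 < 1 / L by positivity]) N
    _ ≤ Real.exp 1 * (K * (2 * L) ^ c 1) := by
        have : (1 + 1 / L) / (1 + 1 / L - 1) = L + 1 := by
          rw [add_sub_cancel_left]
          field_simp
        rw [this]
        gcongr
        linarith
    _ = Real.exp 1 * (K * 2 ^ c 1) * L ^ c 1 := by
        rw [Real.mul_rpow (by norm_num) (by linarith)]
        ring

theorem sum_filter_prime_vonMangoldt_mul_le {f : ℕ → ℝ} {A : ℝ} (hA : 0 ≤ A)
    (hf : ∀ p : ℕ, p.Prime → f p ≤ A) (N : ℕ) :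
    ∑ q ∈ Ioc 0 N with q.Prime, Λ q * f q ≤ A * Real.log 4 * N :=
  calc ∑ q ∈ Ioc 0 N with q.Prime, Λ q * f q
      ≤ ∑ p ∈ Ioc 0 N with p.Prime, A * Real.log p := by
        refine Finset.sum_le_sum fun p hp => ?_
        have hp := (mem_filter.mp hp).2
        rw [ArithmeticFunction.vonMangoldt_apply_prime hp, mul_comm]
        exact mul_le_mul_of_nonneg_right (hf p hp) (Real.log_natCast_nonneg p)
    _ = A * Chebyshev.theta N := by rw [Chebyshev.theta, Nat.floor_natCast, Finset.mul_sum]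
    _ ≤ A * (Real.log 4 * N) := by
        gcongr
        exact Chebyshev.theta_le_log4_mul_x N.cast_nonneg
    _ = A * Real.log 4 * N := (mul_assoc _ _ _).symm

theorem exists_sum_filter_not_prime_vonMangoldt_mul_le {f : ℕ → ℝ} {B : ℝ} (hB : 0 ≤ B)
    (hf : ∀ q : ℕ, IsPrimePow q → f q ≤ B * √q) :
    ∃ K ≥ 0, ∀ N : ℕ, ∑ q ∈ Ioc 0 N with ¬q.Prime, Λ q * f q ≤ K * N := by
  obtain ⟨C, hC⟩ := Chebyshev.psi_sub_theta_le_mul_sqrt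
  refine ⟨B * |C|, by positivity, fun N => ?_⟩
  calc ∑ q ∈ Ioc 0 N with ¬q.Prime, Λ q * f q
      ≤ ∑ q ∈ Ioc 0 N with ¬q.Prime, Λ q * (B * √N) := by
        refine Finset.sum_le_sum fun q hq => ?_
        have hqN : q ≤ N := (mem_Ioc.mp (mem_filter.mp hq).1).2
        by_cases hpp : IsPrimePow q
        · refine mul_le_mul_of_nonneg_left ((hf q hpp).trans ?_)
            ArithmeticFunction.vonMangoldt_nonneg
          gcongr
        · simp [ArithmeticFunction.vonMangoldt_eq_zero_iff.mpr hpp]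
    _ = (Chebyshev.psi N - Chebyshev.theta N) * (B * √N) := by
        rw [Chebyshev.psi_sub_theta_eq_sum_not_prime, Nat.floor_natCast, Finset.sum_mul]
    _ ≤ |C| * √N * (B * √N) := by
        gcongr
        refine (hC N).trans ?_
        gcongr
        exact le_abs_self C
    _ = B * |C| * N := by
        linear_combination B * |C| * Real.mul_self_sqrt N.cast_nonneg

theorem exists_sum_vonMangoldt_mul_le {f : ℕ → ℝ} {A B : ℝ} (hA : 0 ≤ A) (hB : 0 ≤ B)
    (hprime : ∀ p : ℕ, p.Prime → f p ≤ A) (hpow : ∀ q : ℕ, IsPrimePow q → f q ≤ B * √q) :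
    ∃ K ≥ 0, ∀ N : ℕ, ∑ q ∈ Ioc 0 N, Λ q * f q ≤ K * N := by
  obtain ⟨K, hK, hle⟩ := exists_sum_filter_not_prime_vonMangoldt_mul_le hB hpow
  refine ⟨A * Real.log 4 + K, by positivity, fun N => ?_⟩
  rw [← Finset.sum_filter_add_sum_filter_not (Ioc 0 N) Nat.Prime, add_mul]
  exact add_le_add (sum_filter_prime_vonMangoldt_mul_le hA hprime N) (hle N)

variable {K : ℝ}

theorem sum_mul_log_le (hw : ∀ n, 0 ≤ w n) (hsub : ∀ m n, w (m * n) ≤ w m * w n)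
    (hK : ∀ N : ℕ, ∑ q ∈ Ioc 0 N, Λ q * w q ≤ K * N) (hK0 : 0 ≤ K) (N : ℕ) :
    ∑ n ∈ Ioc 0 N, w n * Real.log n ≤ K * N * ∑ n ∈ Ioc 0 N, w n / n := by
  have hlog : ∀ n, w n * Real.log n ≤ (w * ArithmeticFunction.pmul Λ w) n := fun n =>
    calc w n * Real.log n
        = ∑ x ∈ n.divisorsAntidiagonal, w n * Λ x.2 := by
          rw [← ArithmeticFunction.vonMangoldt_sum, Finset.mul_sum,
            ← Nat.sum_divisorsAntidiagonal' (f := fun _ y => w n * Λ y)]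
      _ ≤ ∑ x ∈ n.divisorsAntidiagonal, w x.1 * (Λ x.2 * w x.2) := by
          refine Finset.sum_le_sum fun x hx => ?_
          rw [← (Nat.mem_divisorsAntidiagonal.mp hx).1, mul_left_comm, mul_comm]
          exact mul_le_mul_of_nonneg_left (hsub _ _) ArithmeticFunction.vonMangoldt_nonneg
      _ = (w * ArithmeticFunction.pmul Λ w) n := rfl
  calc ∑ n ∈ Ioc 0 N, w n * Real.log n
      ≤ ∑ n ∈ Ioc 0 N, (w * ArithmeticFunction.pmul Λ w) n := Finset.sum_le_sum fun n _ => hlog n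
    _ = ∑ n ∈ Ioc 0 N, w n * ∑ q ∈ Ioc 0 (N / n), Λ q * w q :=
        ArithmeticFunction.sum_Ioc_mul_eq_sum_sum w (.pmul Λ w) N
    _ ≤ ∑ n ∈ Ioc 0 N, w n * (K * (N / n)) := by
        gcongr with n
        · exact hw n
        · refine (hK _).trans ?_
          gcongr
          exact Nat.cast_div_le
    _ = K * N * ∑ n ∈ Ioc 0 N, w n / n := by
        rw [Finset.mul_sum]
        exact Finset.sum_congr rfl fun n _ => by ring

/- `1 + log N ≤ log n + N / n`, so the logarithmic bound controls the sum itself. -/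
theorem sum_mul_one_add_log_le (hw : ∀ n, 0 ≤ w n) (hsub : ∀ m n, w (m * n) ≤ w m * w n)
    (hK : ∀ N : ℕ, ∑ q ∈ Ioc 0 N, Λ q * w q ≤ K * N) (hK0 : 0 ≤ K) (N : ℕ) :
    (∑ n ∈ Ioc 0 N, w n) * (1 + Real.log N) ≤ (K + 1) * N * ∑ n ∈ Ioc 0 N, w n / n :=
  calc (∑ n ∈ Ioc 0 N, w n) * (1 + Real.log N)
      ≤ ∑ n ∈ Ioc 0 N, (w n * Real.log n + N * (w n / n)) := by
        rw [Finset.sum_mul]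
        refine Finset.sum_le_sum fun n hn => ?_
        obtain ⟨hn0, hnN⟩ := mem_Ioc.mp hn
        have hn : (0 : ℝ) < n := by exact_mod_cast hn0
        have hN : (0 : ℝ) < N := by exact_mod_cast hn0.trans_le hnN
        have hlog : 1 + Real.log N ≤ Real.log n + N / n := by
          have := Real.log_le_sub_one_of_pos (div_pos hN hn)
          rw [Real.log_div hN.ne' hn.ne'] at this
          linarith
        calc w n * (1 + Real.log N) ≤ w n * (Real.log n + N / n) :=
              mul_le_mul_of_nonneg_left hlog (hw n)
          _ = w n * Real.log n + N * (w n / n) := by ring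
    _ ≤ (K + 1) * N * ∑ n ∈ Ioc 0 N, w n / n := by
        rw [Finset.sum_add_distrib, ← Finset.mul_sum]
        linarith [sum_mul_log_le hw hsub hK hK0 N]

theorem exists_sum_le_mul_one_add_log_rpow {B : ℝ} (hw : ∀ n, 0 ≤ w n) (hmul : w.IsMultiplicative)
    (hsub : ∀ m n, w (m * n) ≤ w m * w n) (hpow : ∀ p k : ℕ, p.Prime → w (p ^ k) = c k)
    (hc : ∀ k, c k ≤ B * √2 ^ k) :
    ∃ K > 0, ∀ N : ℕ, ∑ n ∈ Ioc 0 N, w n ≤ K * N * (1 + Real.log N) ^ (c 1 - 1) := by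
  have hc0 : ∀ k, 0 ≤ c k := fun k => hpow 2 k Nat.prime_two ▸ hw _
  have hB : 0 ≤ B := by simpa using (hc0 0).trans (hc 0)
  have hsum : Summable fun k => c k * (1 / 2) ^ k := by
    have hgeom : Summable fun k : ℕ => (√2 * (1 / 2)) ^ k :=
      summable_geometric_of_lt_one (by positivity) (by
        have : √2 < 2 := by rw [Real.sqrt_lt' two_pos]; norm_num
        linarith)
    refine (hgeom.mul_left B).of_nonneg_of_le (fun k => mul_nonneg (hc0 k) (by positivity))
      fun k => ?_
    rw [mul_pow, ← mul_assoc]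
    exact mul_le_mul_of_nonneg_right (hc k) (by positivity)
  have hprimePow : ∀ q : ℕ, IsPrimePow q → w q ≤ B * √q := by
    intro q hq
    obtain ⟨p, k, hp, -, rfl⟩ := (isPrimePow_nat_iff q).mp hq
    have hsqrt : √2 ^ k ≤ √((p ^ k : ℕ) : ℝ) := by
      refine Real.le_sqrt_of_sq_le ?_
      rw [← pow_mul, mul_comm, pow_mul, Real.sq_sqrt two_pos.le]
      exact_mod_cast Nat.pow_le_pow_left hp.two_le k
    rw [hpow p k hp]
    exact (hc k).trans (mul_le_mul_of_nonneg_left hsqrt hB)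
  obtain ⟨K₁, hK₁, hlog⟩ := exists_sum_div_le_one_add_log_rpow hw hmul hpow hsum
  obtain ⟨K₂, hK₂, hcheb⟩ := exists_sum_vonMangoldt_mul_le (hc0 1) hB
    (fun p hp => (by simpa using hpow p 1 hp : w p = c 1).le) hprimePow
  refine ⟨(K₂ + 1) * K₁, by positivity, fun N => ?_⟩
  have hL : 0 < 1 + Real.log N := by linarith [Real.log_natCast_nonneg N]
  rw [Real.rpow_sub_one hL.ne', ← mul_div_assoc, le_div_iff₀ hL]
  calc (∑ n ∈ Ioc 0 N, w n) * (1 + Real.log N)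
      ≤ (K₂ + 1) * N * ∑ n ∈ Ioc 0 N, w n / n := sum_mul_one_add_log_le hw hsub hcheb hK₂ N
    _ ≤ (K₂ + 1) * N * (K₁ * (1 + Real.log N) ^ c 1) := by
        gcongr
        exact hlog N
    _ = _ := by ring

end SummatoryFunction

section DivisorWeight

/-- The arithmetic function `n ↦ d(n) ^ α`. The case split forces the value `0` at `n = 0`, which
an arithmetic function needs, also for `α = 0`. -/
def numDivRpow (α : ℝ) : ArithmeticFunction ℝ :=
  ⟨fun n => if n = 0 then 0 else (numDiv n : ℝ) ^ α, by simp⟩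

variable {α : ℝ}

theorem numDivRpow_apply {n : ℕ} (hn : n ≠ 0) : numDivRpow α n = (numDiv n : ℝ) ^ α := if_neg hn

theorem numDiv_pos {n : ℕ} (hn : n ≠ 0) : 0 < numDiv n :=
  Finset.card_pos.mpr (Nat.nonempty_divisors.mpr hn)

theorem numDivRpow_nonneg (α : ℝ) (n : ℕ) : 0 ≤ numDivRpow α n := by
  rcases eq_or_ne n 0 with rfl | hn
  · simp
  · rw [numDivRpow_apply hn]
    positivity

theorem numDivRpow_mul_le (hα : 0 ≤ α) (m n : ℕ) :
    numDivRpow α (m * n) ≤ numDivRpow α m * numDivRpow α n := by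
  rcases eq_or_ne m 0 with rfl | hm
  · simp
  rcases eq_or_ne n 0 with rfl | hn
  · simp
  rw [numDivRpow_apply (mul_ne_zero hm hn), numDivRpow_apply hm, numDivRpow_apply hn,
    ← Real.mul_rpow (by positivity) (by positivity)]
  gcongr
  rw [numDiv, Nat.divisors_mul]
  exact_mod_cast Finset.card_mul_le

theorem isMultiplicative_numDivRpow (α : ℝ) : (numDivRpow α).IsMultiplicative := by
  refine ArithmeticFunction.IsMultiplicative.iff_ne_zero.mpr ⟨?_, fun {m n} hm hn hmn => ?_⟩
  · simp [numDivRpow_apply one_ne_zero, numDiv]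
  · rw [numDivRpow_apply (mul_ne_zero hm hn), numDivRpow_apply hm, numDivRpow_apply hn, numDiv,
      hmn.card_divisors_mul, Nat.cast_mul, Real.mul_rpow (by positivity) (by positivity)]
    rfl

theorem numDivRpow_prime_pow (α : ℝ) (p k : ℕ) (hp : p.Prime) :
    numDivRpow α (p ^ k) = ((k : ℝ) + 1) ^ α := by
  simp [numDivRpow_apply (pow_ne_zero k hp.ne_zero), numDiv, Nat.divisors_prime_pow hp]

theorem exists_add_one_rpow_le_mul_pow (α : ℝ) {r : ℝ} (hr : 1 < r) :
    ∃ B, ∀ k : ℕ, ((k : ℝ) + 1) ^ α ≤ B * r ^ k := by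
  have hr0 : 0 < r := one_pos.trans hr
  have hexp : ∀ k : ℕ, Real.exp (Real.log r * ((k : ℝ) + 1)) = r * r ^ k := fun k => by
    rw [← Real.rpow_def_of_pos hr0, ← pow_succ', ← Real.rpow_natCast]
    norm_cast
  have hO : (fun k : ℕ => ((k : ℝ) + 1) ^ α) =O[atTop] fun k : ℕ => r * r ^ k := by
    simp_rw [← hexp]
    exact (isLittleO_rpow_exp_pos_mul_atTop α (Real.log_pos hr)).isBigO.comp_tendsto
      (tendsto_atTop_add_const_right _ 1 tendsto_natCast_atTop_atTop)
  obtain ⟨C, -, hC⟩ := Asymptotics.bound_of_isBigO_nat_atTop hO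
  refine ⟨C * r, fun k => ?_⟩
  have hk := hC (x := k) (by positivity)
  rwa [Real.norm_of_nonneg (by positivity), Real.norm_of_nonneg (by positivity), ← mul_assoc] at hk

theorem exists_sum_numDiv_rpow_le (hα : 0 ≤ α) :
    ∃ K > 0, ∀ N : ℕ, ∑ n ∈ Ioc 0 N, (numDiv n : ℝ) ^ α ≤
      K * N * (1 + Real.log N) ^ ((2 : ℝ) ^ α - 1) := by
  obtain ⟨B, hB⟩ := exists_add_one_rpow_le_mul_pow α (Real.lt_sqrt_of_sq_lt (by norm_num) : 1 < √2)
  obtain ⟨K, hK, hbound⟩ := exists_sum_le_mul_one_add_log_rpow (numDivRpow_nonneg α)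
    (isMultiplicative_numDivRpow α) (numDivRpow_mul_le hα) (numDivRpow_prime_pow α) hB
  refine ⟨K, hK, fun N => ?_⟩
  convert hbound N using 1
  · exact Finset.sum_congr rfl fun n hn => (numDivRpow_apply (mem_Ioc.mp hn).1.ne').symm
  · norm_num

end DivisorWeight

section Plancherel

open scoped FourierTransform SchwartzMap

variable {V F : Type*} [NormedAddCommGroup V] [InnerProductSpace ℝ V] [FiniteDimensional ℝ V]
  [MeasurableSpace V] [BorelSpace V] [NormedAddCommGroup F] [InnerProductSpace ℂ F]
  [CompleteSpace F] {f : V → F}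

theorem coeFn_fourier_toLp_two (hf : Integrable f) (hf2 : MemLp f 2) :
    (𝓕 hf2.toLp : Lp F 2) =ᵐ[volume] 𝓕 f := by
  have hcont : Continuous (𝓕 f) := VectorFourier.fourierIntegral_continuous
    Real.continuous_fourierChar continuous_inner hf
  refine ae_eq_of_integral_contDiff_smul_eq ((Lp.memLp _).locallyIntegrable one_le_two)
    hcont.locallyIntegrable fun g hg hgc => ?_
  let h : Lp F 2 (volume : Measure V) := hf2.toLp f
  let φ : 𝓢(V, ℂ) := (hgc.comp_left (g := Complex.ofRealCLM) rfl).toSchwartzMap (by fun_prop)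
  calc ∫ x, g x • (𝓕 h) x
      = (Lp.toTemperedDistribution (𝓕 h)) φ := by simp [φ]
    _ = ∫ x, 𝓕 φ x • h x := by
        rw [← Lp.fourier_toTemperedDistribution_eq, TemperedDistribution.fourier_apply,
          Lp.toTemperedDistribution_apply]
    _ = ∫ x, 𝓕 φ x • f x := by
        refine integral_congr_ae ?_
        filter_upwards [hf2.coeFn_toLp] with x hx
        rw [hx]
    _ = ∫ x, φ x • 𝓕 f x := by
        simpa using! VectorFourier.integral_fourierIntegral_smul_eq_flip (L := innerₗ V)
          Real.continuous_fourierChar continuous_inner φ.integrable hf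
    _ = ∫ x, g x • 𝓕 f x := by simp [φ]

theorem lintegral_enorm_sq_fourier (hf : Integrable f) (hf2 : MemLp f 2) :
    ∫⁻ ξ, ‖𝓕 f ξ‖ₑ ^ 2 = ∫⁻ x, ‖f x‖ₑ ^ 2 := by
  have hnorm : eLpNorm (𝓕 f) 2 = eLpNorm f 2 := by
    rw [← eLpNorm_congr_ae (coeFn_fourier_toLp_two hf hf2), ← Lp.enorm_def, ← ofReal_norm,
      Lp.norm_fourier_eq, ofReal_norm, Lp.enorm_def, eLpNorm_congr_ae hf2.coeFn_toLp]
  have hpow : ∀ g : V → F, eLpNorm g 2 ^ 2 = ∫⁻ x, ‖g x‖ₑ ^ 2 := fun g => by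
    simpa using eLpNorm_nnreal_pow_eq_lintegral (f := g) (μ := volume) (p := 2) two_ne_zero
  rw [← hpow, hnorm, hpow]

end Plancherel

section LaplaceTransform

open scoped FourierTransform

theorem lintegral_eq_ofReal_mul_lintegral_comp_mul_left {r : ℝ} (hr : r ≠ 0) (f : ℝ → ENNReal) :
    ∫⁻ x, f x = ENNReal.ofReal |r| * ∫⁻ x, f (r * x) := by
  have hmap := lintegral_map_equiv (μ := volume) f (Homeomorph.mulLeft₀ r hr).toMeasurableEquiv
  conv_lhs => rw [← Real.smul_map_volume_mul_left hr, lintegral_smul_measure, smul_eq_mul]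
  exact congrArg _ hmap

variable {c : ℝ}

theorem integrable_indicator_Ioi_cexp (hc : 0 < c) (b : ℝ) :
    Integrable ((Set.Ioi b).indicator fun x : ℝ => cexp (-c * x)) :=
  (integrable_indicator_iff measurableSet_Ioi).2
    (integrableOn_exp_mul_complex_Ioi (by simpa using hc) b)

theorem memLp_two_indicator_Ioi_cexp (hc : 0 < c) (b : ℝ) :
    MemLp ((Set.Ioi b).indicator fun x : ℝ => cexp (-c * x)) 2 := by
  refine (memLp_two_iff_integrable_sq_norm
    (integrable_indicator_Ioi_cexp hc b).aestronglyMeasurable).2 ?_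
  have hint : Integrable ((Set.Ioi b).indicator fun x : ℝ => Real.exp (-(2 * c) * x)) :=
    (integrable_indicator_iff measurableSet_Ioi).2
      (integrableOn_exp_mul_Ioi (by linarith) b)
  refine hint.congr (.of_forall fun x => ?_)
  by_cases hx : x ∈ Set.Ioi b
  · simp only [Set.indicator_of_mem hx, norm_exp, ← Real.exp_nat_mul]
    norm_num
    ring
  · simp [Set.indicator_of_notMem hx]

theorem fourier_indicator_Ioi_cexp (hc : 0 < c) (b ξ : ℝ) :
    𝓕 ((Set.Ioi b).indicator fun x : ℝ => cexp (-c * x)) ξ =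
      cexp (-b * (c + 2 * Real.pi * ξ * I)) / (c + 2 * Real.pi * ξ * I) := by
  let z : ℂ := c + 2 * Real.pi * ξ * I
  have hz : (-z).re < 0 := by simpa [z] using hc
  calc 𝓕 ((Set.Ioi b).indicator fun x : ℝ => cexp (-c * x)) ξ
      = ∫ x, (Set.Ioi b).indicator (fun x : ℝ => cexp (-z * x)) x := by
        rw [Real.fourier_real_eq_integral_exp_smul]
        refine integral_congr_ae (.of_forall fun x => ?_)
        by_cases hx : x ∈ Set.Ioi b
        · simp only [Set.indicator_of_mem hx, smul_eq_mul, ← Complex.exp_add, z]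
          push_cast
          ring_nf
        · simp [Set.indicator_of_notMem hx]
    _ = cexp (-b * z) / z := by
        rw [integral_indicator measurableSet_Ioi, integral_exp_mul_complex_Ioi hz, neg_div_neg_eq]
        ring_nf

variable {ι : Type*} (s : Finset ι) (l : ι → ℝ) (d : ι → ℂ)

/-- The summatory function of the family `d`, its terms being counted strictly past their
abscissae `l`. With `l = log` and `d n = a n * √n` the Dirichlet series of `a` at `s` is `s + 1 / 2`
times the Laplace transform of this function at `s + 1 / 2`. -/
def stepSum (x : ℝ) : ℂ := ∑ i ∈ s with l i < x, d i

theorem stepSum_mul_cexp (c x : ℝ) :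
    stepSum s l d x * cexp (-c * x) =
      ∑ i ∈ s, d i * (Set.Ioi (l i)).indicator (fun x : ℝ => cexp (-c * x)) x := by
  simp only [stepSum, Finset.sum_filter, Finset.sum_mul, Set.indicator_apply, Set.mem_Ioi, ite_mul,
    zero_mul, mul_ite, mul_zero]

theorem stepSum_eq_zero {x : ℝ} (hx : ∀ i ∈ s, x ≤ l i) : stepSum s l d x = 0 :=
  Finset.sum_eq_zero fun i hi =>
    absurd (Finset.mem_filter.1 hi).2 (hx i (Finset.mem_filter.1 hi).1).not_gt

theorem measurable_stepSum : Measurable (stepSum s l d) := by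
  have hsum : stepSum s l d = fun x => ∑ i ∈ s, if l i < x then d i else 0 :=
    funext fun x => Finset.sum_filter _ _
  rw [hsum]
  exact Finset.measurable_fun_sum _ fun i _ =>
    Measurable.ite measurableSet_Ioi measurable_const measurable_const

theorem fourier_stepSum_mul_cexp (hc : 0 < c) (ξ : ℝ) :
    𝓕 (fun x : ℝ => stepSum s l d x * cexp (-c * x)) ξ =
      (∑ i ∈ s, d i * cexp (-l i * (c + 2 * Real.pi * ξ * I))) / (c + 2 * Real.pi * ξ * I) := by
  simp only [stepSum_mul_cexp, Finset.sum_div, mul_div_assoc, ← fourier_indicator_Ioi_cexp hc]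
  simp only [Real.fourier_eq, Circle.smul_def, smul_eq_mul, Finset.mul_sum, mul_left_comm _ (d _)]
  rw [integral_finsetSum]
  · simp only [integral_const_mul]
  · exact fun i _ => ((Real.fourierIntegral_convergent_iff ξ).2
      (integrable_indicator_Ioi_cexp hc (l i))).const_mul _

theorem lintegral_enorm_sq_sum_cexp_div (hc : 0 < c) :
    ∫⁻ t : ℝ, ‖(∑ i ∈ s, d i * cexp (-l i * (c + t * I))) / (c + t * I)‖ₑ ^ 2 =
      ENNReal.ofReal (2 * Real.pi) * ∫⁻ x, ‖stepSum s l d x * cexp (-c * x)‖ₑ ^ 2 := by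
  have hint : Integrable fun x : ℝ => stepSum s l d x * cexp (-c * x) := by
    simp only [stepSum_mul_cexp]
    exact integrable_finsetSum _ fun i _ => (integrable_indicator_Ioi_cexp hc (l i)).const_mul _
  have hmem : MemLp (fun x : ℝ => stepSum s l d x * cexp (-c * x)) 2 := by
    simp only [stepSum_mul_cexp]
    exact memLp_finsetSum _ fun i _ => (memLp_two_indicator_Ioi_cexp hc (l i)).const_mul _
  rw [← lintegral_enorm_sq_fourier hint hmem,
    lintegral_eq_ofReal_mul_lintegral_comp_mul_left Real.two_pi_pos.ne', abs_of_pos Real.two_pi_pos]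
  simp only [fourier_stepSum_mul_cexp s l d hc]
  push_cast
  rfl

end LaplaceTransform

section HalfPlane

theorem setLIntegral_re_gt (a : ℝ) {f : ℂ → ENNReal} (hf : Measurable f) :
    ∫⁻ s in {s : ℂ | a < s.re}, f s =
      ∫⁻ u in Set.Ioi (0 : ℝ), ∫⁻ t : ℝ, f ((a + u : ℝ) + t * I) := by
  have hset : MeasurableSet {s : ℂ | a < s.re} := measurableSet_lt measurable_const measurable_re
  have hmeas : Measurable fun p =>
      {s : ℂ | a < s.re}.indicator f (measurableEquivRealProd.symm p) :=
    (hf.indicator hset).comp measurableEquivRealProd.symm.measurable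
  have hind (u t : ℝ) :
      {s : ℂ | a < s.re}.indicator f (measurableEquivRealProd.symm (a + u, t)) =
        (Set.Ioi (0 : ℝ)).indicator (fun u => f ((a + u : ℝ) + t * I)) u := by
    simp only [measurableEquivRealProd_symm_apply, mk_eq_add_mul_I, Set.indicator_apply]
    simp
  rw [← lintegral_indicator hset, ← lintegral_indicator measurableSet_Ioi,
    ← volume_preserving_equiv_real_prod.symm.lintegral_comp (hf.indicator hset),
    Measure.volume_eq_prod, lintegral_prod (fun p => Set.indicator _ f _)
      hmeas.aemeasurable, ← lintegral_add_left_eq_self _ a]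
  refine lintegral_congr fun u => ?_
  simp only [hind]
  by_cases hu : u ∈ Set.Ioi (0 : ℝ)
  · simp only [Set.indicator_of_mem hu]
  · simp only [Set.indicator_of_notMem hu, lintegral_zero]

end HalfPlane

section WeightIntegral

theorem integrableOn_rpow_mul_one_add_rpow_neg {b c : ℝ} (hb : 0 < b) (hbc : b < c) :
    IntegrableOn (fun u : ℝ => u ^ (b - 1) * (1 + u) ^ (-c)) (Set.Ioi 0) := by
  refine mellin_convergent_of_isBigO_scalar (a := c) (b := 0) ?_ ?_ hbc ?_ hb
  · refine ContinuousOn.locallyIntegrableOn (fun u hu => ?_) measurableSet_Ioi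
    exact (ContinuousAt.rpow_const (by fun_prop)
      (Or.inl (by linarith [Set.mem_Ioi.1 hu]))).continuousWithinAt
  · refine Asymptotics.IsBigO.of_bound 1 ?_
    filter_upwards [eventually_gt_atTop 0] with u hu
    rw [Real.norm_of_nonneg (by positivity), Real.norm_of_nonneg (by positivity), one_mul]
    exact Real.rpow_le_rpow_of_nonpos hu (by linarith) (by linarith)
  · refine Asymptotics.IsBigO.of_bound 1 ?_
    filter_upwards [self_mem_nhdsWithin] with u (hu : 0 < u)
    rw [Real.norm_of_nonneg (by positivity), neg_zero, Real.rpow_zero, norm_one, mul_one]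
    exact Real.rpow_le_one_of_one_le_of_nonpos (by linarith) (by linarith)

theorem setLIntegral_rpow_mul_exp_neg_mul {b r : ℝ} (hb : 0 < b) (hr : 0 < r) :
    ∫⁻ u in Set.Ioi (0 : ℝ), ENNReal.ofReal (u ^ (b - 1) * Real.exp (-(r * u))) =
      ENNReal.ofReal ((1 / r) ^ b * Real.Gamma b) := by
  rw [← Real.integral_rpow_mul_exp_neg_mul_Ioi hb hr, ofReal_integral_eq_lintegral_ofReal]
  · simpa using! integrableOn_rpow_mul_exp_neg_mul_rpow (s := b - 1) (by linarith) one_pos hr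
  · filter_upwards [self_mem_ae_restrict measurableSet_Ioi] with u (hu : 0 < u)
    positivity

theorem setLIntegral_rpow_mul_exp_le_integral {b x : ℝ} (hb : 0 < b) (hx : 0 ≤ x) :
    ∫⁻ u in Set.Ioi (0 : ℝ),
        ENNReal.ofReal (u ^ (b - 1) * (1 + u) ^ (-(2 * b)) * Real.exp (-(2 * x * u))) ≤
      ENNReal.ofReal (∫ u in Set.Ioi (0 : ℝ), u ^ (b - 1) * (1 + u) ^ (-(2 * b))) := by
  rw [ofReal_integral_eq_lintegral_ofReal
    (integrableOn_rpow_mul_one_add_rpow_neg hb (by linarith))]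
  · refine setLIntegral_mono' measurableSet_Ioi fun u (hu : 0 < u) => ?_
    refine ENNReal.ofReal_le_ofReal (mul_le_of_le_one_right (by positivity) ?_)
    exact Real.exp_le_one_iff.2 (neg_nonpos.2 (by positivity))
  · filter_upwards [self_mem_ae_restrict measurableSet_Ioi] with u (hu : 0 < u)
    positivity

theorem setLIntegral_rpow_mul_exp_le_Gamma {b x : ℝ} (hb : 0 < b) (hx : 0 < x) :
    ∫⁻ u in Set.Ioi (0 : ℝ),
        ENNReal.ofReal (u ^ (b - 1) * (1 + u) ^ (-(2 * b)) * Real.exp (-(2 * x * u))) ≤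
      ENNReal.ofReal ((2 * x) ^ (-b) * Real.Gamma b) := by
  have hGamma := setLIntegral_rpow_mul_exp_neg_mul hb (r := 2 * x) (by positivity)
  rw [one_div, Real.inv_rpow (by positivity), ← Real.rpow_neg (by positivity)] at hGamma
  rw [← hGamma]
  refine setLIntegral_mono' measurableSet_Ioi fun u (hu : 0 < u) => ?_
  have : (1 + u) ^ (-(2 * b)) ≤ 1 :=
    Real.rpow_le_one_of_one_le_of_nonpos (by linarith) (by linarith)
  gcongr
  exact mul_le_of_le_one_right (by positivity) this

theorem exists_setLIntegral_rpow_mul_exp_le {b : ℝ} (hb : 0 < b) :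
    ∃ C > 0, ∀ x ≥ 0,
      ∫⁻ u in Set.Ioi (0 : ℝ),
          ENNReal.ofReal (u ^ (b - 1) * (1 + u) ^ (-(2 * b)) * Real.exp (-(2 * x * u))) ≤
        ENNReal.ofReal (C * (1 + x) ^ (-b)) := by
  let J : ℝ := ∫ u in Set.Ioi (0 : ℝ), u ^ (b - 1) * (1 + u) ^ (-(2 * b))
  have hJ : 0 ≤ J := setIntegral_nonneg measurableSet_Ioi fun u (hu : 0 < u) => by positivity
  have hΓ : 0 < Real.Gamma b := Real.Gamma_pos_of_pos hb
  refine ⟨2 ^ b * J + Real.Gamma b, by positivity, fun x hx => ?_⟩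
  have hle {y : ℝ} (hxy : 1 + x ≤ y) : y ^ (-b) ≤ (1 + x) ^ (-b) :=
    Real.rpow_le_rpow_of_nonpos (by linarith) hxy (by linarith)
  rcases le_total x 1 with hx1 | hx1
  · refine (setLIntegral_rpow_mul_exp_le_integral hb hx).trans (ENNReal.ofReal_le_ofReal ?_)
    calc J = 2 ^ b * J * 2 ^ (-b) := by rw [Real.rpow_neg two_pos.le]; field_simp
      _ ≤ (2 ^ b * J + Real.Gamma b) * (1 + x) ^ (-b) :=
        mul_le_mul (le_add_of_nonneg_right hΓ.le) (hle (by linarith))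
          (by positivity) (by positivity)
  · refine (setLIntegral_rpow_mul_exp_le_Gamma hb (by linarith)).trans
      (ENNReal.ofReal_le_ofReal ?_)
    rw [mul_comm]
    exact mul_le_mul (le_add_of_nonneg_left (by positivity)) (hle (by linarith))
      (by positivity) (by positivity)

theorem exists_lintegral_rpow_mul_lintegral_exp_le {b : ℝ} (hb : 0 < b) :
    ∃ C > 0, ∀ g : ℝ → ENNReal, Measurable g →
      ∫⁻ u in Set.Ioi (0 : ℝ), ENNReal.ofReal (u ^ (b - 1) * (1 + u) ^ (-(2 * b))) *
          ∫⁻ x in Set.Ioi (0 : ℝ), g x * ENNReal.ofReal (Real.exp (-(2 * x * u))) ≤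
        ENNReal.ofReal C * ∫⁻ x in Set.Ioi (0 : ℝ), g x * ENNReal.ofReal ((1 + x) ^ (-b)) := by
  obtain ⟨C, hC, hle⟩ := exists_setLIntegral_rpow_mul_exp_le hb
  refine ⟨C, hC, fun g hg => ?_⟩
  calc ∫⁻ u in Set.Ioi (0 : ℝ), ENNReal.ofReal (u ^ (b - 1) * (1 + u) ^ (-(2 * b))) *
          ∫⁻ x in Set.Ioi (0 : ℝ), g x * ENNReal.ofReal (Real.exp (-(2 * x * u)))
      = ∫⁻ u in Set.Ioi (0 : ℝ), ∫⁻ x in Set.Ioi (0 : ℝ), g x *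
          ENNReal.ofReal (u ^ (b - 1) * (1 + u) ^ (-(2 * b)) * Real.exp (-(2 * x * u))) := by
        refine setLIntegral_congr_fun measurableSet_Ioi fun u (hu : 0 < u) => ?_
        rw [← lintegral_const_mul _ (by fun_prop)]
        refine lintegral_congr fun x => ?_
        rw [mul_left_comm, ← ENNReal.ofReal_mul (by positivity)]
    _ = ∫⁻ x in Set.Ioi (0 : ℝ), g x * ∫⁻ u in Set.Ioi (0 : ℝ),
          ENNReal.ofReal (u ^ (b - 1) * (1 + u) ^ (-(2 * b)) * Real.exp (-(2 * x * u))) := by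
        rw [lintegral_lintegral_swap (by fun_prop)]
        exact lintegral_congr fun x => lintegral_const_mul _ (by fun_prop)
    _ ≤ ∫⁻ x in Set.Ioi (0 : ℝ), ENNReal.ofReal C * (g x * ENNReal.ofReal ((1 + x) ^ (-b))) := by
        refine setLIntegral_mono' measurableSet_Ioi fun x (hx : 0 < x) => ?_
        rw [mul_left_comm, ← ENNReal.ofReal_mul hC.le]
        gcongr
        exact hle x hx.le
    _ = ENNReal.ofReal C * ∫⁻ x in Set.Ioi (0 : ℝ), g x * ENNReal.ofReal ((1 + x) ^ (-b)) :=
        lintegral_const_mul _ (by fun_prop)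

end WeightIntegral

section DirichletPolynomial

theorem natCast_cpow_neg_eq_sqrt_mul_cexp {n : ℕ} (hn : n ≠ 0) (s : ℂ) :
    (n : ℂ) ^ (-s) = √n * cexp (-Real.log n * (s + 1 / 2)) := by
  have hsqrt : ((√n : ℝ) : ℂ) = cexp (Real.log n * (1 / 2)) := by
    rw [Real.sqrt_eq_rpow, Real.rpow_def_of_pos (by positivity)]
    push_cast
    rfl
  rw [cpow_def_of_ne_zero (by exact_mod_cast hn), hsqrt, ← Complex.exp_add, natCast_log]
  ring_nf

variable {T : Finset ℕ} (hT : 0 ∉ T) (a : ℕ → ℂ)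

include hT

theorem sum_mul_natCast_cpow_neg_eq (s : ℂ) :
    ∑ n ∈ T, a n * (n : ℂ) ^ (-s) =
      ∑ n ∈ T, a n * √n * cexp (-Real.log n * (s + 1 / 2)) :=
  Finset.sum_congr rfl fun n hn => by
    rw [natCast_cpow_neg_eq_sqrt_mul_cexp (ne_of_mem_of_not_mem hn hT), mul_assoc]

theorem lintegral_enorm_sq_dirichletPolynomial_div {u : ℝ} (hu : 0 < u) :
    ∫⁻ t : ℝ, ‖(∑ n ∈ T, a n * (n : ℂ) ^ (-((1 / 2 + u : ℝ) + t * I))) /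
        ((1 / 2 + u : ℝ) + t * I + 1 / 2)‖ₑ ^ 2 =
      ENNReal.ofReal (2 * Real.pi) * ∫⁻ x in Set.Ioi (0 : ℝ),
        ENNReal.ofReal (‖stepSum T (fun n => Real.log n) (fun n => a n * √n) x‖ ^ 2 *
          Real.exp (-(2 * x))) * ENNReal.ofReal (Real.exp (-(2 * x * u))) := by
  let σ : ℝ → ℂ := stepSum T (fun n => Real.log n) (fun n => a n * √n)
  have hσ : (fun x => ‖σ x * cexp (-(1 + u : ℝ) * x)‖ₑ ^ 2).support ⊆ Set.Ioi 0 := fun x hx => by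
    contrapose! hx
    have : σ x = 0 := stepSum_eq_zero _ _ _ fun n _ =>
      (not_lt.1 hx).trans (Real.log_natCast_nonneg n)
    simp [this]
  calc ∫⁻ t : ℝ, ‖(∑ n ∈ T, a n * (n : ℂ) ^ (-((1 / 2 + u : ℝ) + t * I))) /
        ((1 / 2 + u : ℝ) + t * I + 1 / 2)‖ₑ ^ 2
      = ∫⁻ t : ℝ, ‖(∑ n ∈ T, a n * √n * cexp (-Real.log n * ((1 + u : ℝ) + t * I))) /
          ((1 + u : ℝ) + t * I)‖ₑ ^ 2 := by
        refine lintegral_congr fun t => ?_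
        have hs : ((1 / 2 + u : ℝ) : ℂ) + t * I + 1 / 2 = (1 + u : ℝ) + t * I := by
          push_cast; ring
        rw [sum_mul_natCast_cpow_neg_eq hT, hs]
    _ = ENNReal.ofReal (2 * Real.pi) * ∫⁻ x, ‖σ x * cexp (-(1 + u : ℝ) * x)‖ₑ ^ 2 :=
        lintegral_enorm_sq_sum_cexp_div T _ _ (by linarith)
    _ = _ := by
        rw [← setLIntegral_eq_of_support_subset hσ]
        refine congrArg _ (lintegral_congr fun x => ?_)
        rw [← ENNReal.ofReal_mul (by positivity), ← ofReal_norm,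
          ← ENNReal.ofReal_pow (by positivity), norm_mul, norm_exp, mul_pow,
          ← Real.exp_nat_mul, mul_assoc (_ ^ 2), ← Real.exp_add]
        congr 3
        simp
        ring

end DirichletPolynomial

section WeightedEmbedding

variable {w : ℕ → ℝ} {K β : ℝ}

theorem sum_filter_log_lt_le (hw : ∀ n ≠ 0, 0 < w n) (hK : 0 ≤ K) (hβ : 0 ≤ β)
    (hsum : ∀ N : ℕ, ∑ n ∈ Ioc 0 N, w n ≤ K * N * (1 + Real.log N) ^ β)
    {T : Finset ℕ} (hT : 0 ∉ T) {x : ℝ} (hx : 0 ≤ x) :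
    ∑ n ∈ T with Real.log (n : ℕ) < x, w n ≤ K * Real.exp x * (1 + x) ^ β := by
  let N : ℕ := ⌊Real.exp x⌋₊
  have hN : 0 < N := Nat.floor_pos.2 (Real.one_le_exp hx)
  have hNx : (N : ℝ) ≤ Real.exp x := Nat.floor_le (Real.exp_pos x).le
  have hlog : Real.log N ≤ x := (Real.log_le_iff_le_exp (by positivity)).2 hNx
  have hsub : {n ∈ T | Real.log (n : ℕ) < x} ⊆ Ioc 0 N := fun n hn => by
    obtain ⟨hnT, hnx⟩ := Finset.mem_filter.1 hn
    have hn0 : 0 < n := Nat.pos_of_ne_zero (ne_of_mem_of_not_mem hnT hT)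
    exact Finset.mem_Ioc.2 ⟨hn0, Nat.le_floor ((Real.log_lt_iff_lt_exp (by positivity)).1 hnx).le⟩
  calc ∑ n ∈ T with Real.log (n : ℕ) < x, w n
      ≤ ∑ n ∈ Ioc 0 N, w n := Finset.sum_le_sum_of_subset_of_nonneg hsub fun n hn _ =>
        (hw n (Finset.mem_Ioc.1 hn).1.ne').le
    _ ≤ K * N * (1 + Real.log N) ^ β := hsum N
    _ ≤ K * Real.exp x * (1 + x) ^ β := by gcongr

theorem norm_sum_mul_sqrt_sq_le (hw : ∀ n ≠ 0, 0 < w n) {S : Finset ℕ} (hS : 0 ∉ S)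
    (a : ℕ → ℂ) :
    ‖∑ n ∈ S, a n * √(n : ℕ)‖ ^ 2 ≤ (∑ n ∈ S, w n) * ∑ n ∈ S, n * ‖a n‖ ^ 2 / w n := by
  have hw' : ∀ n ∈ S, 0 < w n := fun n hn => hw n (ne_of_mem_of_not_mem hn hS)
  calc ‖∑ n ∈ S, a n * √(n : ℕ)‖ ^ 2 ≤ (∑ n ∈ S, ‖a n‖ * √(n : ℕ)) ^ 2 := by
        gcongr
        refine norm_sum_le_of_le _ fun n _ => ?_
        rw [norm_mul, norm_real, Real.norm_of_nonneg (Real.sqrt_nonneg _)]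
    _ ≤ (∑ n ∈ S, w n) * ∑ n ∈ S, n * ‖a n‖ ^ 2 / w n := by
        refine Finset.sum_sq_le_sum_mul_sum_of_sq_le_mul _ (fun n hn => (hw' n hn).le)
          (fun n hn => div_nonneg (by positivity) (hw' n hn).le) fun n hn => ?_
        rw [mul_div_cancel₀ _ (hw' n hn).ne', mul_pow, Real.sq_sqrt n.cast_nonneg, mul_comm]

theorem lintegral_indicator_Ioi_exp_neg (b : ℝ) :
    ∫⁻ x, (Set.Ioi b).indicator (fun x => ENNReal.ofReal (Real.exp (-x))) x =
      ENNReal.ofReal (Real.exp (-b)) := by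
  have hint : IntegrableOn (fun x => Real.exp (-x)) (Set.Ioi b) := by
    simpa using integrableOn_exp_mul_Ioi (neg_one_lt_zero (R := ℝ)) b
  rw [lintegral_indicator measurableSet_Ioi, ← integral_exp_neg_Ioi,
    ofReal_integral_eq_lintegral_ofReal hint (.of_forall fun x => (Real.exp_pos _).le)]

theorem lintegral_sum_filter_log_mul_exp_neg {T : Finset ℕ} (hT : 0 ∉ T) {b : ℕ → ℝ}
    (hb : ∀ n ∈ T, 0 ≤ b n) :
    ∫⁻ x, ENNReal.ofReal (∑ n ∈ T with Real.log (n : ℕ) < x, b n * Real.exp (-x)) =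
      ENNReal.ofReal (∑ n ∈ T, b n / n) := by
  let e (n : ℕ) : ℝ → ENNReal :=
    (Set.Ioi (Real.log n)).indicator fun x => ENNReal.ofReal (Real.exp (-x))
  have he (n : ℕ) : Measurable (e n) := Measurable.indicator (by fun_prop) measurableSet_Ioi
  calc ∫⁻ x, ENNReal.ofReal (∑ n ∈ T with Real.log (n : ℕ) < x, b n * Real.exp (-x))
      = ∫⁻ x, ∑ n ∈ T, ENNReal.ofReal (b n) * e n x := by
        refine lintegral_congr fun x => ?_
        rw [ENNReal.ofReal_sum_of_nonneg fun n hn =>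
          mul_nonneg (hb n (Finset.mem_filter.1 hn).1) (Real.exp_pos _).le, Finset.sum_filter]
        refine Finset.sum_congr rfl fun n hn => ?_
        simp only [e, Set.indicator_apply, Set.mem_Ioi, mul_ite, mul_zero,
          ENNReal.ofReal_mul (hb n hn)]
    _ = ∑ n ∈ T, ENNReal.ofReal (b n) * ENNReal.ofReal (Real.exp (-Real.log n)) := by
        rw [lintegral_finsetSum _ fun n _ => (he n).const_mul _]
        simp only [lintegral_const_mul _ (he _), e, lintegral_indicator_Ioi_exp_neg]
    _ = ENNReal.ofReal (∑ n ∈ T, b n / n) := by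
        rw [ENNReal.ofReal_sum_of_nonneg fun n hn => div_nonneg (hb n hn) n.cast_nonneg]
        refine Finset.sum_congr rfl fun n hn => ?_
        have hn0 : (0 : ℝ) < n := by exact_mod_cast Nat.pos_of_ne_zero (ne_of_mem_of_not_mem hn hT)
        rw [← ENNReal.ofReal_mul (hb n hn), Real.exp_neg, Real.exp_log hn0, div_eq_mul_inv]

theorem norm_sq_stepSum_log_mul_le (hw : ∀ n ≠ 0, 0 < w n) (hK : 0 ≤ K) (hβ : 0 ≤ β)
    (hsum : ∀ N : ℕ, ∑ n ∈ Ioc 0 N, w n ≤ K * N * (1 + Real.log N) ^ β)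
    {T : Finset ℕ} (hT : 0 ∉ T) (a : ℕ → ℂ) {x : ℝ} (hx : 0 ≤ x) :
    ‖stepSum T (fun n => Real.log n) (fun n => a n * √n) x‖ ^ 2 * Real.exp (-(2 * x)) *
        (1 + x) ^ (-β) ≤
      ∑ n ∈ T with Real.log (n : ℕ) < x, K * (n * ‖a n‖ ^ 2 / w n) * Real.exp (-x) := by
  have hS : 0 ∉ {n ∈ T | Real.log (n : ℕ) < x} := fun h => hT (Finset.mem_filter.1 h).1
  let E : ℝ := ∑ n ∈ T with Real.log (n : ℕ) < x, n * ‖a n‖ ^ 2 / w n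
  have hE : 0 ≤ E := Finset.sum_nonneg fun n hn => by
    have := hw n (ne_of_mem_of_not_mem hn hS)
    positivity
  calc ‖stepSum T (fun n => Real.log n) (fun n => a n * √n) x‖ ^ 2 *
        Real.exp (-(2 * x)) * (1 + x) ^ (-β)
      ≤ K * Real.exp x * (1 + x) ^ β * E * Real.exp (-(2 * x)) * (1 + x) ^ (-β) := by
        gcongr
        refine (norm_sum_mul_sqrt_sq_le hw hS a).trans ?_
        gcongr
        exact sum_filter_log_lt_le hw hK hβ hsum hT hx
    _ = K * E * (Real.exp x * Real.exp (-(2 * x))) * ((1 + x) ^ β * (1 + x) ^ (-β)) := by ring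
    _ = K * E * Real.exp (-x) := by
        rw [← Real.exp_add, ← Real.rpow_add (by linarith), add_neg_cancel, Real.rpow_zero]
        ring_nf
    _ = ∑ n ∈ T with Real.log (n : ℕ) < x, K * (n * ‖a n‖ ^ 2 / w n) * Real.exp (-x) := by
        rw [Finset.mul_sum, Finset.sum_mul]

theorem lintegral_norm_sq_stepSum_log_le (hw : ∀ n ≠ 0, 0 < w n) (hK : 0 ≤ K) (hβ : 0 ≤ β)
    (hsum : ∀ N : ℕ, ∑ n ∈ Ioc 0 N, w n ≤ K * N * (1 + Real.log N) ^ β)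
    {T : Finset ℕ} (hT : 0 ∉ T) (a : ℕ → ℂ) :
    ∫⁻ x in Set.Ioi (0 : ℝ),
        ENNReal.ofReal (‖stepSum T (fun n => Real.log n) (fun n => a n * √n) x‖ ^ 2 *
          Real.exp (-(2 * x))) * ENNReal.ofReal ((1 + x) ^ (-β)) ≤
      ENNReal.ofReal (K * ∑ n ∈ T, ‖a n‖ ^ 2 / w n) := by
  have hpos : ∀ n ∈ T, 0 ≤ K * (n * ‖a n‖ ^ 2 / w n) := fun n hn => by
    have := hw n (ne_of_mem_of_not_mem hn hT)
    positivity
  calc ∫⁻ x in Set.Ioi (0 : ℝ),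
        ENNReal.ofReal (‖stepSum T (fun n => Real.log n) (fun n => a n * √n) x‖ ^ 2 *
          Real.exp (-(2 * x))) * ENNReal.ofReal ((1 + x) ^ (-β))
      ≤ ∫⁻ x in Set.Ioi (0 : ℝ), ENNReal.ofReal
          (∑ n ∈ T with Real.log (n : ℕ) < x, K * (n * ‖a n‖ ^ 2 / w n) * Real.exp (-x)) := by
        refine setLIntegral_mono' measurableSet_Ioi fun x (hx : 0 < x) => ?_
        rw [← ENNReal.ofReal_mul (by positivity)]
        exact ENNReal.ofReal_le_ofReal (norm_sq_stepSum_log_mul_le hw hK hβ hsum hT a hx.le)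
    _ ≤ ENNReal.ofReal (∑ n ∈ T, K * (n * ‖a n‖ ^ 2 / w n) / n) :=
        (setLIntegral_le_lintegral _ _).trans_eq (lintegral_sum_filter_log_mul_exp_neg hT hpos)
    _ = ENNReal.ofReal (K * ∑ n ∈ T, ‖a n‖ ^ 2 / w n) := by
        rw [Finset.mul_sum]
        congr 1
        refine Finset.sum_congr rfl fun n hn => ?_
        have hn0 : (n : ℝ) ≠ 0 := by exact_mod_cast ne_of_mem_of_not_mem hn hT
        field_simp

theorem ofReal_norm_sq_mul_rpow_le (hβ : 0 ≤ β) (z : ℂ) {s : ℂ} (hs : 1 / 2 < s.re) :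
    ENNReal.ofReal (‖z‖ ^ 2 * (s.re - 1 / 2) ^ (β - 1) * ‖s + 1 / 2‖ ^ (-2 * β - 2)) ≤
      ENNReal.ofReal ((s.re - 1 / 2) ^ (β - 1) * (s.re + 1 / 2) ^ (-(2 * β))) *
        ‖z / (s + 1 / 2)‖ₑ ^ 2 := by
  have hre : 0 < s.re - 1 / 2 := by linarith
  have hnorm : s.re + 1 / 2 ≤ ‖s + 1 / 2‖ := by simpa using re_le_norm (s + 1 / 2)
  have hnorm0 : 0 < ‖s + 1 / 2‖ := by linarith
  have hsplit : ‖s + 1 / 2‖ ^ (-2 * β - 2) = ‖s + 1 / 2‖ ^ (-(2 * β)) / ‖s + 1 / 2‖ ^ 2 := by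
    rw [← Real.rpow_natCast, ← Real.rpow_sub hnorm0]
    norm_num
  rw [← ofReal_norm, ← ENNReal.ofReal_pow (norm_nonneg _), ← ENNReal.ofReal_mul (by positivity),
    norm_div, div_pow, hsplit]
  refine ENNReal.ofReal_le_ofReal ?_
  calc ‖z‖ ^ 2 * (s.re - 1 / 2) ^ (β - 1) * (‖s + 1 / 2‖ ^ (-(2 * β)) / ‖s + 1 / 2‖ ^ 2)
      = (s.re - 1 / 2) ^ (β - 1) * ‖s + 1 / 2‖ ^ (-(2 * β)) * (‖z‖ ^ 2 / ‖s + 1 / 2‖ ^ 2) := by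
        ring
    _ ≤ (s.re - 1 / 2) ^ (β - 1) * (s.re + 1 / 2) ^ (-(2 * β)) *
          (‖z‖ ^ 2 / ‖s + 1 / 2‖ ^ 2) := by
        gcongr ?_ * ?_ * ?_
        exact Real.rpow_le_rpow_of_nonpos (by linarith) hnorm (by linarith)

theorem setLIntegral_dirichletPolynomial_le (hβ : 0 ≤ β) {T : Finset ℕ} (hT : 0 ∉ T)
    (a : ℕ → ℂ) :
    ∫⁻ s in {s : ℂ | 1 / 2 < s.re},
        ENNReal.ofReal (‖∑ n ∈ T, a n * (n : ℂ) ^ (-s)‖ ^ 2 *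
          (s.re - 1 / 2) ^ (β - 1) * ‖s + 1 / 2‖ ^ (-2 * β - 2)) ≤
      ENNReal.ofReal (2 * Real.pi) *
        ∫⁻ u in Set.Ioi (0 : ℝ), ENNReal.ofReal (u ^ (β - 1) * (1 + u) ^ (-(2 * β))) *
          ∫⁻ x in Set.Ioi (0 : ℝ),
            ENNReal.ofReal (‖stepSum T (fun n => Real.log n) (fun n => a n * √n) x‖ ^ 2 *
              Real.exp (-(2 * x))) * ENNReal.ofReal (Real.exp (-(2 * x * u))) := by
  let F : ℂ → ℂ := fun s => ∑ n ∈ T, a n * (n : ℂ) ^ (-s)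
  have hset : MeasurableSet {s : ℂ | 1 / 2 < s.re} :=
    measurableSet_lt measurable_const measurable_re
  calc ∫⁻ s in {s : ℂ | 1 / 2 < s.re},
        ENNReal.ofReal (‖F s‖ ^ 2 * (s.re - 1 / 2) ^ (β - 1) * ‖s + 1 / 2‖ ^ (-2 * β - 2))
      ≤ ∫⁻ s in {s : ℂ | 1 / 2 < s.re},
          ENNReal.ofReal ((s.re - 1 / 2) ^ (β - 1) * (s.re + 1 / 2) ^ (-(2 * β))) *
            ‖F s / (s + 1 / 2)‖ₑ ^ 2 :=
        setLIntegral_mono' hset fun s hs => ofReal_norm_sq_mul_rpow_le hβ _ hs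
    _ = ∫⁻ u in Set.Ioi (0 : ℝ), ENNReal.ofReal (u ^ (β - 1) * (1 + u) ^ (-(2 * β))) *
          ∫⁻ t : ℝ, ‖F ((1 / 2 + u : ℝ) + t * I) / ((1 / 2 + u : ℝ) + t * I + 1 / 2)‖ₑ ^ 2 := by
        rw [setLIntegral_re_gt _ (by fun_prop)]
        refine lintegral_congr fun u => ?_
        rw [← lintegral_const_mul _ (by fun_prop)]
        refine lintegral_congr fun t => ?_
        have hre : ((1 / 2 + u : ℝ) + t * I : ℂ).re = 1 / 2 + u := by simp
        rw [hre, add_sub_cancel_left, add_right_comm, add_halves]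
    _ = _ := by
        rw [← lintegral_const_mul' _ _ ENNReal.ofReal_ne_top]
        refine setLIntegral_congr_fun measurableSet_Ioi fun u (hu : 0 < u) => ?_
        rw [lintegral_enorm_sq_dirichletPolynomial_div hT a hu, mul_left_comm]

theorem exists_setLIntegral_dirichletPolynomial_le (hw : ∀ n ≠ 0, 0 < w n) (hK : 0 < K)
    (hβ : 0 < β) (hsum : ∀ N : ℕ, ∑ n ∈ Ioc 0 N, w n ≤ K * N * (1 + Real.log N) ^ β) :
    ∃ C > 0, ∀ (T : Finset ℕ) (a : ℕ → ℂ), 0 ∉ T →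
      ∫⁻ s in {s : ℂ | 1 / 2 < s.re},
          ENNReal.ofReal (‖∑ n ∈ T, a n * (n : ℂ) ^ (-s)‖ ^ 2 *
            (s.re - 1 / 2) ^ (β - 1) * ‖s + 1 / 2‖ ^ (-2 * β - 2)) ≤
        ENNReal.ofReal (C * ∑ n ∈ T, ‖a n‖ ^ 2 / w n) := by
  obtain ⟨C, hC, hker⟩ := exists_lintegral_rpow_mul_lintegral_exp_le hβ
  refine ⟨2 * Real.pi * C * K, by positivity, fun T a hT => ?_⟩
  have hmeas := measurable_stepSum T (fun n => Real.log n) (fun n => a n * √n)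
  refine (setLIntegral_dirichletPolynomial_le hβ.le hT a).trans ?_
  calc _ ≤ ENNReal.ofReal (2 * Real.pi) *
          (ENNReal.ofReal C * ENNReal.ofReal (K * ∑ n ∈ T, ‖a n‖ ^ 2 / w n)) := by
        gcongr
        refine (hker _ (by fun_prop)).trans ?_
        gcongr
        exact lintegral_norm_sq_stepSum_log_le hw hK.le hβ.le hsum hT a
    _ = ENNReal.ofReal (2 * Real.pi * C * K * ∑ n ∈ T, ‖a n‖ ^ 2 / w n) := by
        rw [← ENNReal.ofReal_mul hC.le, ← ENNReal.ofReal_mul (by positivity)]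
        ring_nf

end WeightedEmbedding

section DirichletSeries

open scoped Topology

theorem lintegral_norm_sq_tsum_mul_le {X E : Type*} [MeasurableSpace X] [NormedAddCommGroup E]
    {μ : Measure X} {f : ℕ → X → E} {ρ : X → ℝ} {B : ENNReal}
    (hf : ∀ n, AEStronglyMeasurable (f n) μ) (hρ : AEMeasurable ρ μ)
    (hB : ∀ N, ∫⁻ x, ENNReal.ofReal (‖∑ n ∈ range N, f n x‖ ^ 2 * ρ x) ∂μ ≤ B) :
    ∫⁻ x, ENNReal.ofReal (‖∑' n, f n x‖ ^ 2 * ρ x) ∂μ ≤ B := by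
  let g : ℕ → X → ENNReal := fun N x => ENNReal.ofReal (‖∑ n ∈ range N, f n x‖ ^ 2 * ρ x)
  have hg (N : ℕ) : AEMeasurable (g N) μ := by
    have := (Finset.aestronglyMeasurable_fun_sum (range N) fun n _ => hf n).norm.aemeasurable
    fun_prop
  have hpoint (x : X) :
      ENNReal.ofReal (‖∑' n, f n x‖ ^ 2 * ρ x) ≤ liminf (fun N => g N x) atTop := by
    by_cases hx : Summable fun n => f n x
    · have hlim : Tendsto (fun N => g N x) atTop (𝓝 (ENNReal.ofReal (‖∑' n, f n x‖ ^ 2 * ρ x))) :=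
        ENNReal.tendsto_ofReal ((hx.hasSum.tendsto_sum_nat.norm.pow 2).mul_const _)
      exact hlim.liminf_eq.ge
    · simp [tsum_eq_zero_of_not_summable hx]
  calc ∫⁻ x, ENNReal.ofReal (‖∑' n, f n x‖ ^ 2 * ρ x) ∂μ
      ≤ ∫⁻ x, liminf (fun N => g N x) atTop ∂μ := lintegral_mono hpoint
    _ ≤ liminf (fun N => ∫⁻ x, g N x ∂μ) atTop := lintegral_liminf_le' hg
    _ ≤ B := (liminf_le_liminf (.of_forall hB)).trans_eq (liminf_const B)

theorem exists_setLIntegral_dirichletSeries_le {w : ℕ → ℝ} {K β : ℝ} (hw : ∀ n ≠ 0, 0 < w n)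
    (hK : 0 < K) (hβ : 0 < β)
    (hsum : ∀ N : ℕ, ∑ n ∈ Ioc 0 N, w n ≤ K * N * (1 + Real.log N) ^ β) :
    ∃ C > 0, ∀ a : ℕ → ℂ, Summable (fun n : ℕ => ‖a (n + 1)‖ ^ 2 / w (n + 1)) →
      ∫⁻ s in {s : ℂ | 1 / 2 < s.re},
          ENNReal.ofReal (‖∑' n : ℕ, a (n + 1) * ((n + 1 : ℕ) : ℂ) ^ (-s)‖ ^ 2 *
            (s.re - 1 / 2) ^ (β - 1) * ‖s + 1 / 2‖ ^ (-2 * β - 2)) ≤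
        ENNReal.ofReal (C * ∑' n : ℕ, ‖a (n + 1)‖ ^ 2 / w (n + 1)) := by
  obtain ⟨C, hC, hle⟩ := exists_setLIntegral_dirichletPolynomial_le hw hK hβ hsum
  refine ⟨C, hC, fun a ha => ?_⟩
  simp only [mul_assoc]
  refine lintegral_norm_sq_tsum_mul_le (fun n => Measurable.aestronglyMeasurable (by fun_prop))
    (by fun_prop) fun N => ?_
  have hshift {M : Type} [AddCommMonoid M] (f : ℕ → M) :
      ∑ n ∈ range N, f (n + 1) = ∑ n ∈ Ico 1 (N + 1), f n := by
    rw [range_eq_Ico, Finset.sum_Ico_add' f, zero_add]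
  have hfin := hle (Ico 1 (N + 1)) a (by simp)
  simp only [← hshift, mul_assoc] at hfin
  refine hfin.trans (ENNReal.ofReal_le_ofReal ?_)
  gcongr
  exact ha.sum_le_tsum _ fun n _ => div_nonneg (sq_nonneg _) (hw _ n.succ_ne_zero).le

end DirichletSeries

/-- `𝒟_α` embeds continuously into the Bergman-type space
`D_{β,i}(ℂ_{1/2})` with `β = 2^α - 1`. -/
theorem statement12 (α : ℝ) (hα : 0 < α) (β : ℝ) (hβ : β = (2 : ℝ) ^ α - 1) :
    ∃ C > 0, ∀ a : ℕ → ℂ,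
      Summable (fun n : ℕ => ‖a (n + 1)‖ ^ 2 / (numDiv (n + 1) : ℝ) ^ α) →
      ∫⁻ s in {s : ℂ | 1 / 2 < s.re},
          ENNReal.ofReal (‖∑' n : ℕ, a (n + 1) * ((n + 1 : ℕ) : ℂ) ^ (-s)‖ ^ 2 *
            (s.re - 1 / 2) ^ (β - 1) * ‖s + 1 / 2‖ ^ (-2 * β - 2)) ≤
        ENNReal.ofReal (C * ∑' n : ℕ, ‖a (n + 1)‖ ^ 2 / (numDiv (n + 1) : ℝ) ^ α) := by
  have hβ0 : 0 < β := hβ ▸ sub_pos.2 (Real.one_lt_rpow one_lt_two hα)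
  obtain ⟨K, hK, hsum⟩ := exists_sum_numDiv_rpow_le hα.le
  rw [← hβ] at hsum
  exact exists_setLIntegral_dirichletSeries_le (w := fun n => (numDiv n : ℝ) ^ α)
    (fun n hn => Real.rpow_pos_of_pos (Nat.cast_pos.2 (numDiv_pos hn)) α) hK hβ0 hsum
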